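/- Fix N ≥ 1 and write a = 1/2^N; suppose ‖(t,s) − (t',s')‖_2 ≤ 1 for all (t,s),(t',s') ∈ SG' × SG''. Let f : SG' × SG'' → ℝ be the continuous function satisfying f(L_ω(t),K_η(s)) = α_{ωη}(t,s)·f(t,s) + h_{ωη}(t,s) for all ω,η ∈ I^N and (t,s) ∈ SG' × SG''. Suppose each h_{ωη} is Hölder continuous with exponent s_h ∈ (0,1] and constant K_h, and each α_{ωη} is Hölder continuous with exponent s_{α_{ωη}} ∈ (0,1] and constant K_{α_{ωη}}, with ‖α_{ωη}‖_∞ < 1. Set ‖α‖_∞ = max_{ω,η ∈ I^N} ‖α_{ωη}‖_∞, s_α = min_{ω,η} s_{α_{ωη}}, and s = min{s_h, s_α}. If ‖α‖_∞ > 1/2^N and s − 1 + ln(‖α‖_∞)/ln(a) > 0, then for every λ with 0 < λ ≤ s − 1 + ln(‖α‖_∞)/ln(a), the function f is Hölder continuous with exponent λ: there is a constant C with |f(t,s) − f(t',s')| ≤ C·‖(t,s)−(t',s')‖_2^{λ} for all points of SG' × SG''. -/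

import Mathlib

noncomputable section

/-- Points of the plane ℝ². -/
abbrev E2 := EuclideanSpace ℝ (Fin 2)

/-- The contraction `L_i(t) = (t + p_i)/2` of the plane towards the vertex `p i`. -/
def Lmap (p : Fin 3 → E2) (i : Fin 3) (t : E2) : E2 := (2 : ℝ)⁻¹ • (t + p i)

/-- `p 1, p 2, p 3` are the vertices of an equilateral triangle: pairwise distinct
points with all three pairwise distances equal. -/
def IsEquilateral (p : Fin 3 → E2) : Prop :=
  Function.Injective p ∧
    ∀ i j k l : Fin 3, i ≠ j → k ≠ l → dist (p i) (p j) = dist (p k) (p l)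

/-- `S` is the Sierpiński gasket with vertex set `p`: the unique nonempty compact set
invariant under the three contractions `L_i(t) = (t + p_i)/2`. -/
def IsSG (p : Fin 3 → E2) (S : Set E2) : Prop :=
  IsEquilateral p ∧ S.Nonempty ∧ IsCompact S ∧ S = ⋃ i : Fin 3, Lmap p i '' S

/-- For a word `ω = ω₁ω₂…ω_n` over `I = {1,2,3}`, the composition
`L_ω = L_{ω₁} ∘ L_{ω₂} ∘ ⋯ ∘ L_{ω_n}`. -/
def wordMap (p : Fin 3 → E2) {n : ℕ} (ω : Fin n → Fin 3) : E2 → E2 :=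
  (List.ofFn fun k => Lmap p (ω k)).foldr (· ∘ ·) id

/-- The word alphabet `I^N`: words of length `N` over `I = {1,2,3}`. -/
abbrev Word (N : ℕ) := Fin N → Fin 3

/-- The Euclidean (`ℓ²`) distance `‖(t,s) − (t',s')‖₂` on the product `ℝ² × ℝ²`. -/
def dist2 (x y : E2 × E2) : ℝ := Real.sqrt (dist x.1 y.1 ^ 2 + dist x.2 y.2 ^ 2)

/-- `g` is Hölder continuous on `S` with constant `K` and exponent `β` (with respect
to the Euclidean distance on `ℝ² × ℝ²`). -/
def HolderOn2 (S : Set (E2 × E2)) (g : E2 × E2 → ℝ) (K β : ℝ) : Prop :=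
  ∀ x ∈ S, ∀ y ∈ S, |g x - g y| ≤ K * dist2 x y ^ β

/-- The sup-norm `‖g‖_∞ = sup_{x ∈ S} |g x|` of a function on `S`. -/
noncomputable def supAbs (S : Set (E2 × E2)) (g : E2 × E2 → ℝ) : ℝ :=
  sSup ((fun x => |g x|) '' S)

open Set Filter Topology Metric Bornology
open scoped NNReal

/-! Points of the self-similar set at distance about `aⁿ` lie in two `n`-cells sharing a point,
where `a` is the contraction ratio. On an `n`-cell the functional equation gives
`osc_{n+1} ≤ a^λ osc_n + B (aˢ)ⁿ`, and since `aˢ < a^λ` the inhomogeneous term is absorbed, so the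
oscillation of `f` on `n`-cells is `O((a^λ)ⁿ)`. For a gasket, the linking property comes from
barycentric coordinates: distinct `1`-cells `i` and `j` are separated by the hyperplane on which
the `j`-th coordinate is `1/2`, which they can only approach together near the common vertex
`midpoint (p i) (p j)`. -/

section MemHolderOn

variable {X Y : Type*} [PseudoMetricSpace X] [PseudoMetricSpace Y] {r : ℝ≥0} {f : X → Y} {S : Set X}

/-- `f` is Hölder continuous on `S` with exponent `r` and some constant: the version of
`HolderOnWith` that forgets the constant. -/
def MemHolderOn (r : ℝ≥0) (f : X → Y) (S : Set X) : Prop :=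
  ∃ C, HolderOnWith C r f S

lemma memHolderOn_of_dist_le {C : ℝ}
    (h : ∀ x ∈ S, ∀ y ∈ S, dist (f x) (f y) ≤ C * dist x y ^ (r : ℝ)) : MemHolderOn r f S := by
  refine ⟨C.toNNReal, fun x hx y hy => ?_⟩
  have hdist : dist (f x) (f y) ≤ C.toNNReal * dist x y ^ (r : ℝ) :=
    (h x hx y hy).trans (by gcongr; exact C.le_coe_toNNReal)
  rw [edist_nndist, edist_nndist, ← ENNReal.coe_rpow_of_nonneg _ r.coe_nonneg]
  exact_mod_cast hdist

lemma MemHolderOn.continuousOn (hf : MemHolderOn r f S) (hr : 0 < r) : ContinuousOn f S :=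
  hf.choose_spec.continuousOn hr

lemma MemHolderOn.of_le {s : ℝ≥0} (hf : MemHolderOn r f S) (hS : IsBounded S) (hs : s ≤ r) :
    MemHolderOn s f S := by
  obtain ⟨C, hC⟩ := hf
  refine ⟨_, hC.of_le (D := (diam S).toNNReal) (fun x hx y hy => ?_) hs⟩
  rw [edist_dist]
  exact ENNReal.ofReal_le_ofReal (dist_le_diam_of_mem hS hx hy)

lemma eventually_nhdsGT_exists_forall_holderOnWith {ι : Type*} [Finite ι] {g : ι → X → Y}
    (hS : IsBounded S) (hg : ∀ i, ∃ s > r, MemHolderOn s (g i) S) :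
    ∀ᶠ s in 𝓝[>] r, ∃ K, ∀ i, HolderOnWith K s (g i) S := by
  have hmem : ∀ i, ∀ᶠ s in 𝓝[>] r, MemHolderOn s (g i) S := fun i => by
    obtain ⟨s, hrs, hs⟩ := hg i
    filter_upwards [Ioc_mem_nhdsGT hrs] with t ht using hs.of_le hS ht.2
  filter_upwards [eventually_all.2 hmem] with s hs
  have hconst : ∀ i, ∀ᶠ K in atTop, HolderOnWith K s (g i) S := fun i => by
    obtain ⟨K, hK⟩ := hs i
    filter_upwards [eventually_ge_atTop K] with K' hK' using hK.mono_const hK'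
  exact (eventually_all.2 hconst).exists

end MemHolderOn

section IteratedFunctionSystem

variable {ι κ X Y : Type*} {w : ι → X → X} {v : κ → Y → Y} {S : Set X} {T : Set Y}

/-- The iterated function system on `X` formed by the compositions of `n` maps of the system `w`,
indexed by words: `ω ↦ w (ω 0) ∘ ⋯ ∘ w (ω (n - 1))`. -/
def wordMaps (w : ι → X → X) (n : ℕ) (ω : Fin n → ι) : X → X :=
  (List.ofFn fun k => w (ω k)).foldr (· ∘ ·) id

/-- The product of two iterated function systems, indexed by pairs. -/
def prodMaps (w : ι → X → X) (v : κ → Y → Y) (i : ι × κ) : X × Y → X × Y :=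
  Prod.map (w i.1) (v i.2)

/-- `SameCell w S n x y` says that `x` and `y` lie in a common cell of level `n` of the iterated
function system `w` on `S`, that is, in one of the sets `w i₁ ∘ ⋯ ∘ w iₙ '' S`. -/
inductive SameCell (w : ι → X → X) (S : Set X) : ℕ → X → X → Prop
  | base {x y : X} (hx : x ∈ S) (hy : y ∈ S) : SameCell w S 0 x y
  | map {n : ℕ} {x y : X} (i : ι) (h : SameCell w S n x y) : SameCell w S (n + 1) (w i x) (w i y)

lemma wordMaps_cons {n : ℕ} (i : ι) (ω : Fin n → ι) :
    wordMaps w (n + 1) (Fin.cons i ω : Fin (n + 1) → ι) = w i ∘ wordMaps w n ω := by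
  simp [wordMaps, List.ofFn_succ]

lemma mapsTo_wordMaps (hw : ∀ i, MapsTo (w i) S S) (n : ℕ) (ω : Fin n → ι) :
    MapsTo (wordMaps w n ω) S S := by
  induction n with
  | zero => exact mapsTo_id S
  | succ n ih =>
    rw [← Fin.cons_self_tail ω, wordMaps_cons]
    exact (hw _).comp (ih _)

lemma mapsTo_prodMaps (hw : ∀ i, MapsTo (w i) S S) (hv : ∀ j, MapsTo (v j) T T) (i : ι × κ) :
    MapsTo (prodMaps w v i) (S ×ˢ T) (S ×ˢ T) :=
  (hw i.1).prodMap (hv i.2)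

namespace SameCell

variable {n : ℕ} {x y : X}

lemma symm (h : SameCell w S n x y) : SameCell w S n y x := by
  induction h with
  | base hx hy => exact base hy hx
  | map i _ ih => exact ih.map i

lemma mem (hw : ∀ i, MapsTo (w i) S S) (h : SameCell w S n x y) : x ∈ S ∧ y ∈ S := by
  induction h with
  | base hx hy => exact ⟨hx, hy⟩
  | map i _ ih => exact ⟨hw i ih.1, hw i ih.2⟩

lemma prod {x' y' : Y} (h : SameCell w S n x y) (h' : SameCell v T n x' y') :
    SameCell (prodMaps w v) (S ×ˢ T) n (x, x') (y, y') := by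
  induction h generalizing x' y' with
  | base hx hy =>
    cases h' with
    | base hx' hy' => exact base ⟨hx, hx'⟩ ⟨hy, hy'⟩
  | map i _ ih =>
    cases h' with
    | map j h' => exact (ih h').map (i, j)

lemma exists_wordMaps (N : ℕ) (h : SameCell w S (n + N) x y) :
    ∃ (ω : Fin N → ι) (x' y' : X),
      SameCell w S n x' y' ∧ wordMaps w N ω x' = x ∧ wordMaps w N ω y' = y := by
  induction N generalizing x y with
  | zero => exact ⟨Fin.elim0, x, y, h, rfl, rfl⟩
  | succ N ih =>
    cases h with
    | map i h =>
      obtain ⟨ω, x', y', hcell, rfl, rfl⟩ := ih h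
      exact ⟨Fin.cons i ω, x', y', hcell, by rw [wordMaps_cons]; rfl, by rw [wordMaps_cons]; rfl⟩

lemma of_mul (N : ℕ) (h : SameCell w S (n * N) x y) : SameCell (wordMaps w N) S n x y := by
  induction n generalizing x y with
  | zero =>
    rw [zero_mul] at h
    cases h with
    | base hx hy => exact base hx hy
  | succ n ih =>
    rw [Nat.succ_mul] at h
    obtain ⟨ω, x', y', hcell, rfl, rfl⟩ := h.exists_wordMaps N
    exact (ih hcell).map ω

end SameCell

end IteratedFunctionSystem

section LinkedCells

variable {ι κ X Y : Type*} {w : ι → X → X} {v : κ → Y → Y} {S : Set X} {T : Set Y} {a : ℝ≥0}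

lemma lipschitzWith_wordMaps [PseudoMetricSpace X] (hw : ∀ i, LipschitzWith a (w i)) (n : ℕ)
    (ω : Fin n → ι) : LipschitzWith (a ^ n) (wordMaps w n ω) := by
  induction n with
  | zero => exact pow_zero a ▸ LipschitzWith.id
  | succ n ih =>
    rw [← Fin.cons_self_tail ω, wordMaps_cons, pow_succ']
    exact (hw _).comp (ih _)

lemma lipschitzWith_prodMaps [PseudoMetricSpace X] [PseudoMetricSpace Y]
    (hw : ∀ i, LipschitzWith a (w i)) (hv : ∀ j, LipschitzWith a (v j)) (i : ι × κ) :
    LipschitzWith a (prodMaps w v i) := by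
  have h := ((hw i.1).comp .prod_fst).prodMk ((hv i.2).comp .prod_snd)
  rwa [mul_one, max_self] at h

lemma SameCell.dist_le [PseudoMetricSpace X] (hS : IsBounded S) (hw : ∀ i, LipschitzWith a (w i))
    {n : ℕ} {x y : X} (h : SameCell w S n x y) : dist x y ≤ a ^ n * diam S := by
  induction h with
  | base hx hy => simpa using dist_le_diam_of_mem hS hx hy
  | map i _ ih =>
    rw [pow_succ', mul_assoc]
    exact ((hw i).dist_le_mul _ _).trans (by gcongr)

/-- Points of `S` at distance at most `δ * aⁿ`, for a suitable `δ > 0` independent of `n`, lie in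
two cells of level `n` that have a point in common. -/
def LinkedCells [PseudoMetricSpace X] (w : ι → X → X) (S : Set X) (a : ℝ≥0) : Prop :=
  ∃ δ > 0, ∀ (n : ℕ), ∀ x ∈ S, ∀ y ∈ S, dist x y ≤ δ * a ^ n →
    ∃ z, SameCell w S n x z ∧ SameCell w S n z y

namespace LinkedCells

lemma wordMaps [PseudoMetricSpace X] (h : LinkedCells w S a) (N : ℕ) :
    LinkedCells (wordMaps w N) S (a ^ N) := by
  obtain ⟨δ, hδ, hlink⟩ := h
  refine ⟨δ, hδ, fun n x hx y hy hxy => ?_⟩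
  obtain ⟨z, hxz, hzy⟩ := hlink (n * N) x hx y hy (by rwa [mul_comm n, pow_mul])
  exact ⟨z, hxz.of_mul N, hzy.of_mul N⟩

lemma prodMaps [PseudoMetricSpace X] [PseudoMetricSpace Y] (hw : LinkedCells w S a)
    (hv : LinkedCells v T a) : LinkedCells (prodMaps w v) (S ×ˢ T) a := by
  obtain ⟨δ, hδ, hlink⟩ := hw
  obtain ⟨ε, hε, hlink'⟩ := hv
  refine ⟨min δ ε, lt_min hδ hε, fun n x hx y hy hxy => ?_⟩
  rw [Prod.dist_eq, max_le_iff] at hxy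
  obtain ⟨z, hxz, hzy⟩ := hlink n _ hx.1 _ hy.1 (hxy.1.trans (by gcongr; exact min_le_left _ _))
  obtain ⟨z', hxz', hzy'⟩ :=
    hlink' n _ hx.2 _ hy.2 (hxy.2.trans (by gcongr; exact min_le_right _ _))
  exact ⟨(z, z'), hxz.prod hxz', hzy.prod hzy'⟩

lemma memHolderOn [MetricSpace X] [PseudoMetricSpace Y] (h : LinkedCells w S a) (ha₀ : 0 < a)
    (ha₁ : a < 1) {f : X → Y} {r : ℝ≥0} {C : ℝ}
    (hosc : ∀ n x y, SameCell w S n x y → dist (f x) (f y) ≤ C * ((a : ℝ) ^ (r : ℝ)) ^ n) :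
    MemHolderOn r f S := by
  obtain ⟨δ, hδ, hlink⟩ := h
  have ha₀' : (0 : ℝ) < a := ha₀
  set ρ : ℝ := (a : ℝ) ^ (r : ℝ)
  have hρ₀ : 0 < ρ := Real.rpow_pos_of_pos ha₀' _
  have hρ₁ : ρ ≤ 1 := Real.rpow_le_one a.coe_nonneg ha₁.le r.coe_nonneg
  refine memHolderOn_of_dist_le (C := 2 * C / ρ / δ ^ (r : ℝ)) fun x hx y hy => ?_
  have hC : 0 ≤ C := by simpa using hosc 0 x x (.base hx hx)
  suffices hscaled : dist (f x) (f y) ≤ 2 * C / ρ * (dist x y / δ) ^ (r : ℝ) by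
    rwa [Real.div_rpow dist_nonneg hδ.le, ← mul_div_assoc, mul_div_right_comm] at hscaled
  rcases eq_or_ne x y with rfl | hxy
  · rw [dist_self]
    positivity
  rcases le_total (dist x y / δ) 1 with hnear | hfar
  · obtain ⟨n, hlt, hle⟩ :=
      exists_nat_pow_near_of_lt_one (div_pos (dist_pos.2 hxy) hδ) hnear ha₀' ha₁
    obtain ⟨z, hxz, hzy⟩ := hlink n x hx y hy (by rwa [div_le_iff₀' hδ] at hle)
    calc dist (f x) (f y) ≤ C * ρ ^ n + C * ρ ^ n :=
          (dist_triangle _ (f z) _).trans (add_le_add (hosc n x z hxz) (hosc n z y hzy))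
      _ = 2 * C / ρ * ((a : ℝ) ^ (n + 1)) ^ (r : ℝ) := by
          rw [← Real.rpow_pow_comm a.coe_nonneg, pow_succ]
          field_simp
          ring
      _ ≤ 2 * C / ρ * (dist x y / δ) ^ (r : ℝ) := by gcongr
  · calc dist (f x) (f y) ≤ C := by simpa using hosc 0 x y (.base hx hy)
      _ ≤ 2 * C / ρ := by
          rw [le_div_iff₀ hρ₀]
          nlinarith
      _ ≤ 2 * C / ρ * (dist x y / δ) ^ (r : ℝ) :=
          le_mul_of_one_le_right (by positivity) (Real.one_le_rpow hfar r.coe_nonneg)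

end LinkedCells

end LinkedCells

section FunctionalEquation

variable {ι X 𝕜 E : Type*} [NormedField 𝕜] [SeminormedAddCommGroup E] [NormedSpace 𝕜 E]
  {w : ι → X → X} {S : Set X} {a s Kα Kh : ℝ≥0} {α : ι → X → 𝕜} {h : ι → X → E} {f : X → E}

lemma norm_sub_le_of_functional_eq [PseudoMetricSpace X] {M ρ : ℝ} (hM : ∀ x ∈ S, ‖f x‖ ≤ M)
    (hf : ∀ i, ∀ x ∈ S, f (w i x) = α i x • f x + h i x) (hα : ∀ i, HolderOnWith Kα s (α i) S)
    (hh : ∀ i, HolderOnWith Kh s (h i) S) (hαρ : ∀ i, ∀ x ∈ S, ‖α i x‖ ≤ ρ) (i : ι) {x y : X}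
    (hx : x ∈ S) (hy : y ∈ S) :
    ‖f (w i x) - f (w i y)‖ ≤ ρ * ‖f x - f y‖ + (Kα * M + Kh) * dist x y ^ (s : ℝ) := by
  have hαxy : ‖α i x - α i y‖ ≤ Kα * dist x y ^ (s : ℝ) := by
    simpa only [dist_eq_norm] using (hα i).dist_le hx hy
  have hhxy : ‖h i x - h i y‖ ≤ Kh * dist x y ^ (s : ℝ) := by
    simpa only [dist_eq_norm] using (hh i).dist_le hx hy
  calc ‖f (w i x) - f (w i y)‖
      = ‖α i x • (f x - f y) + (α i x - α i y) • f y + (h i x - h i y)‖ := by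
        rw [hf i x hx, hf i y hy, smul_sub, sub_smul]
        congr 1
        abel
    _ ≤ ‖α i x‖ * ‖f x - f y‖ + ‖α i x - α i y‖ * ‖f y‖ + ‖h i x - h i y‖ :=
        norm_add₃_le.trans_eq (by rw [norm_smul, norm_smul])
    _ ≤ ρ * ‖f x - f y‖ + Kα * dist x y ^ (s : ℝ) * M + Kh * dist x y ^ (s : ℝ) := by
        gcongr
        exacts [hαρ i x hx, hM y hy]
    _ = ρ * ‖f x - f y‖ + (Kα * M + Kh) * dist x y ^ (s : ℝ) := by ring

lemma exists_dist_le_of_functional_eq [PseudoMetricSpace X] {ρ : ℝ} (hS : IsBounded S)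
    (hmaps : ∀ i, MapsTo (w i) S S) (hw : ∀ i, LipschitzWith a (w i)) (hfS : IsBounded (f '' S))
    (hf : ∀ i, ∀ x ∈ S, f (w i x) = α i x • f x + h i x) (hα : ∀ i, HolderOnWith Kα s (α i) S)
    (hh : ∀ i, HolderOnWith Kh s (h i) S) (hαρ : ∀ i, ∀ x ∈ S, ‖α i x‖ ≤ ρ)
    (hρ : (a : ℝ) ^ (s : ℝ) < ρ) :
    ∃ C, ∀ n x y, SameCell w S n x y → dist (f x) (f y) ≤ C * ρ ^ n := by
  obtain ⟨M, hM₀, hM⟩ := hfS.exists_pos_norm_le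
  rw [forall_mem_image] at hM
  set σ : ℝ := (a : ℝ) ^ (s : ℝ)
  have hσ₀ : 0 ≤ σ := Real.rpow_nonneg a.coe_nonneg _
  have hρ₀ : 0 ≤ ρ := hσ₀.trans hρ.le
  set B : ℝ := (Kα * M + Kh) * diam S ^ (s : ℝ)
  -- `n ↦ -D σⁿ` is a particular solution of the recursion `b (n + 1) = ρ b n + B σⁿ`.
  set D : ℝ := B / (ρ - σ)
  have hD : D * (ρ - σ) = B := div_mul_cancel₀ _ (sub_pos.2 hρ).ne'
  have hD₀ : 0 ≤ D := div_nonneg (by positivity) (sub_pos.2 hρ).le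
  have hosc : ∀ n x y, SameCell w S n x y → ‖f x - f y‖ ≤ (2 * M + D) * ρ ^ n - D * σ ^ n := by
    intro n x y hxy
    induction hxy with
    | @base x y hx hy =>
      calc ‖f x - f y‖ ≤ ‖f x‖ + ‖f y‖ := norm_sub_le _ _
        _ ≤ M + M := add_le_add (hM hx) (hM hy)
        _ = (2 * M + D) * ρ ^ 0 - D * σ ^ 0 := by ring
    | @map n x y i hxy ih =>
      have hdist : dist x y ^ (s : ℝ) ≤ σ ^ n * diam S ^ (s : ℝ) := by
        rw [Real.rpow_pow_comm a.coe_nonneg, ← Real.mul_rpow (by positivity) diam_nonneg]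
        exact Real.rpow_le_rpow dist_nonneg (hxy.dist_le hS hw) s.coe_nonneg
      calc ‖f (w i x) - f (w i y)‖
          ≤ ρ * ‖f x - f y‖ + (Kα * M + Kh) * dist x y ^ (s : ℝ) :=
            norm_sub_le_of_functional_eq (fun x hx => hM hx) hf hα hh hαρ i (hxy.mem hmaps).1
              (hxy.mem hmaps).2
        _ ≤ ρ * ((2 * M + D) * ρ ^ n - D * σ ^ n)
              + (Kα * M + Kh) * (σ ^ n * diam S ^ (s : ℝ)) := by gcongr
        _ = (2 * M + D) * ρ ^ (n + 1) - D * σ ^ (n + 1) := by linear_combination -σ ^ n * hD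
  refine ⟨2 * M + D, fun n x y hxy => ?_⟩
  rw [dist_eq_norm]
  exact (hosc n x y hxy).trans (sub_le_self _ (mul_nonneg hD₀ (pow_nonneg hσ₀ n)))

theorem memHolderOn_of_functional_eq [Finite ι] [MetricSpace X] {r : ℝ≥0} (hS : IsBounded S)
    (hmaps : ∀ i, MapsTo (w i) S S) (ha₀ : 0 < a) (ha₁ : a < 1) (hw : ∀ i, LipschitzWith a (w i))
    (hlink : LinkedCells w S a) (hfS : IsBounded (f '' S))
    (hf : ∀ i, ∀ x ∈ S, f (w i x) = α i x • f x + h i x)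
    (hα : ∀ i, ∃ s > r, MemHolderOn s (α i) S) (hh : ∀ i, ∃ s > r, MemHolderOn s (h i) S)
    (hαr : ∀ i, ∀ x ∈ S, ‖α i x‖ ≤ (a : ℝ) ^ (r : ℝ)) : MemHolderOn r f S := by
  obtain ⟨s, ⟨⟨Kα, hKα⟩, Kh, hKh⟩, hrs⟩ :=
    ((eventually_nhdsGT_exists_forall_holderOnWith hS hα).and
      (eventually_nhdsGT_exists_forall_holderOnWith hS hh)).and self_mem_nhdsWithin |>.exists
  obtain ⟨C, hC⟩ := exists_dist_le_of_functional_eq hS hmaps hw hfS hf hKα hKh hαr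
    (Real.rpow_lt_rpow_of_exponent_gt ha₀ ha₁ hrs)
  exact hlink.memHolderOn ha₀ ha₁ hC

end FunctionalEquation

section Attractor

variable {ι X : Type*} {w : ι → X → X} {S : Set X}

/-- `S` is the attractor of the iterated function system `w`: a nonempty compact set which is the
union of its images under the maps of `w`. -/
structure IsAttractor [TopologicalSpace X] (w : ι → X → X) (S : Set X) : Prop where
  nonempty : S.Nonempty
  isCompact : IsCompact S
  eq_iUnion_image : S = ⋃ i, w i '' S

namespace IsAttractor

lemma mapsTo [TopologicalSpace X] (hS : IsAttractor w S) (i : ι) : MapsTo (w i) S S := by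
  intro x hx
  rw [hS.eq_iUnion_image]
  exact mem_iUnion.2 ⟨i, mem_image_of_mem _ hx⟩

lemma exists_eq [TopologicalSpace X] (hS : IsAttractor w S) {x : X} (hx : x ∈ S) :
    ∃ i, ∃ y ∈ S, w i y = x := by
  rw [hS.eq_iUnion_image] at hx
  exact mem_iUnion.1 hx

lemma mem_of_isFixedPt [MetricSpace X] (hS : IsAttractor w S) {i : ι} {K : ℝ≥0} (hK : K < 1)
    (hw : LipschitzWith K (w i)) {p : X} (hp : Function.IsFixedPt (w i) p) : p ∈ S := by
  obtain ⟨x, hx, hmin⟩ := hS.isCompact.exists_isMinOn hS.nonempty (f := (dist · p)) (by fun_prop)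
  have hle : dist x p ≤ K * dist x p :=
    calc dist x p ≤ dist (w i x) p := hmin (hS.mapsTo i hx)
      _ = dist (w i x) (w i p) := by rw [hp]
      _ ≤ K * dist x p := hw.dist_le_mul x p
  have hxp : dist x p ≤ 0 := by nlinarith [dist_nonneg (x := x) (y := p), NNReal.coe_lt_one.2 hK]
  exact dist_le_zero.1 hxp ▸ hx

end IsAttractor

end Attractor

section Gasket

variable {ι V : Type*} [NormedAddCommGroup V] [NormedSpace ℝ V] (b : AffineBasis ι ℝ V)
  {S : Set V}

/-- The iterated function system whose attractor is the gasket with vertices `p`: the homotheties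
of ratio `1 / 2` centred at the points `p i`. -/
abbrev midpointMaps (p : ι → V) (i : ι) : V → V :=
  midpoint ℝ (p i)

lemma dist_midpoint_midpoint_left (p x y : V) :
    dist (midpoint ℝ p x) (midpoint ℝ p y) = dist x y / 2 := by
  rw [midpoint_eq_smul_add, midpoint_eq_smul_add, dist_smul₀, dist_add_left, invOf_eq_inv,
    Real.norm_of_nonneg (by norm_num), inv_mul_eq_div]

lemma lipschitzWith_midpoint (p : V) : LipschitzWith 2⁻¹ (midpoint ℝ p) :=
  LipschitzWith.of_dist_le_mul fun x y => by
    rw [dist_midpoint_midpoint_left, NNReal.coe_inv, NNReal.coe_ofNat, inv_mul_eq_div]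

lemma coord_midpoint_self (j : ι) (x : V) :
    b.coord j (midpoint ℝ (b j) x) = (1 + b.coord j x) / 2 := by
  rw [AffineMap.map_midpoint, b.coord_apply_eq, midpoint_eq_smul_add, smul_eq_mul,
    invOf_eq_inv, inv_mul_eq_div]

lemma coord_midpoint_of_ne {i j : ι} (hij : i ≠ j) (x : V) :
    b.coord j (midpoint ℝ (b i) x) = b.coord j x / 2 := by
  rw [AffineMap.map_midpoint, b.coord_apply_ne hij.symm, midpoint_eq_smul_add, smul_eq_mul,
    invOf_eq_inv, inv_mul_eq_div, zero_add]

variable {b}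

lemma IsAttractor.vertex_mem (hS : IsAttractor (midpointMaps b) S) (j : ι) : b j ∈ S :=
  hS.mem_of_isFixedPt (i := j) (K := 2⁻¹) (by norm_num) (lipschitzWith_midpoint _)
    (midpoint_self ℝ _)

variable [Finite ι]

lemma exists_lipschitzWith_coord (b : AffineBasis ι ℝ V) :
    ∃ K, ∀ j, LipschitzWith K (b.coord j) := by
  have := b.finiteDimensional
  have hlip : ∀ j, ∀ᶠ K in atTop, LipschitzWith K (b.coord j) := fun j => by
    obtain ⟨K, hK⟩ := (b.coord j).lipschitzWith_of_finiteDimensional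
    filter_upwards [eventually_ge_atTop K] with K' hK' using hK.weaken hK'
  exact (eventually_all.2 hlip).exists

lemma IsAttractor.coord_nonneg (hS : IsAttractor (midpointMaps b) S) (j : ι) {x : V} (hx : x ∈ S) :
    0 ≤ b.coord j x := by
  have := b.finiteDimensional
  obtain ⟨y, hy, hmin⟩ := hS.isCompact.exists_isMinOn hS.nonempty
    (continuous_barycentric_coord b j).continuousOn
  refine le_trans ?_ (hmin hx)
  obtain ⟨i, u, hu, rfl⟩ := hS.exists_eq hy
  have hle : b.coord j (midpoint ℝ (b i) u) ≤ b.coord j u := hmin hu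
  rcases eq_or_ne i j with rfl | hij
  · rw [coord_midpoint_self] at hle ⊢
    linarith
  · rw [coord_midpoint_of_ne b hij] at hle ⊢
    linarith

lemma IsAttractor.coord_le_one (hS : IsAttractor (midpointMaps b) S) (j : ι) {x : V} (hx : x ∈ S) :
    b.coord j x ≤ 1 := by
  have := Fintype.ofFinite ι
  rw [← b.sum_coord_apply_eq_one x]
  exact Finset.single_le_sum (f := fun i => b.coord i x) (fun i _ => hS.coord_nonneg i hx)
    (Finset.mem_univ j)

lemma sameCell_vertex_of_lt_coord (hS : IsAttractor (midpointMaps b) S) (j : ι) {n : ℕ}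
    {x : V} (hx : x ∈ S) (hxj : 1 - 2⁻¹ ^ n < b.coord j x) :
    SameCell (midpointMaps b) S n x (b j) := by
  induction n generalizing x with
  | zero => exact .base hx (hS.vertex_mem j)
  | succ n ih =>
    obtain ⟨i, u, hu, rfl⟩ := hS.exists_eq hx
    rw [pow_succ] at hxj
    rcases eq_or_ne i j with rfl | hij
    · rw [coord_midpoint_self] at hxj
      simpa using (ih hu (by linarith)).map i
    · have hpow : (2⁻¹ : ℝ) ^ n ≤ 1 := pow_le_one₀ (by norm_num) (by norm_num)
      rw [coord_midpoint_of_ne b hij] at hxj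
      linarith [hS.coord_le_one j hu]

lemma lt_coord_of_dist_midpoint_lt (hS : IsAttractor (midpointMaps b) S) {K : ℝ≥0}
    (hK : ∀ j, LipschitzWith K (b.coord j)) {i j : ι} (hij : i ≠ j) {u v : V} (hv : v ∈ S) {ε : ℝ}
    (hdist : K * dist (midpoint ℝ (b i) u) (midpoint ℝ (b j) v) < ε / 2) :
    1 - ε < b.coord j u := by
  have hcoord := neg_lt_of_abs_lt (((hK j).dist_le_mul _ _).trans_lt hdist)
  rw [coord_midpoint_of_ne b hij, coord_midpoint_self] at hcoord
  linarith [hS.coord_nonneg j hv]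

lemma exists_sameCell_of_dist_lt (hS : IsAttractor (midpointMaps b) S) {K : ℝ≥0}
    (hK : ∀ j, LipschitzWith K (b.coord j)) {n : ℕ} {x y : V} (hx : x ∈ S) (hy : y ∈ S)
    (hxy : K * dist x y < 2⁻¹ ^ n) :
    ∃ z, SameCell (midpointMaps b) S n x z ∧ SameCell (midpointMaps b) S n z y := by
  induction n generalizing x y with
  | zero => exact ⟨x, .base hx hx, .base hx hy⟩
  | succ n ih =>
    obtain ⟨i, u, hu, rfl⟩ := hS.exists_eq hx
    obtain ⟨j, v, hv, rfl⟩ := hS.exists_eq hy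
    rw [pow_succ, ← div_eq_mul_inv] at hxy
    rcases eq_or_ne i j with rfl | hij
    · rw [dist_midpoint_midpoint_left, ← mul_div_assoc] at hxy
      obtain ⟨z, huz, hzv⟩ := ih hu hv (by linarith)
      exact ⟨midpoint ℝ (b i) z, huz.map i, hzv.map i⟩
    · have hu' := sameCell_vertex_of_lt_coord hS j hu
        (lt_coord_of_dist_midpoint_lt hS hK hij hv hxy)
      have hv' := sameCell_vertex_of_lt_coord hS i hv
        (lt_coord_of_dist_midpoint_lt hS hK hij.symm hu (by rwa [dist_comm]))
      refine ⟨midpoint ℝ (b i) (b j), hu'.map i, ?_⟩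
      rw [midpoint_comm]
      exact hv'.symm.map j

theorem linkedCells_midpointMaps (hS : IsAttractor (midpointMaps b) S) :
    LinkedCells (midpointMaps b) S 2⁻¹ := by
  obtain ⟨K, hK⟩ := exists_lipschitzWith_coord b
  refine ⟨(K + 1 : ℝ)⁻¹, by positivity, fun n x hx y hy hxy =>
    exists_sameCell_of_dist_lt hS hK hx hy ?_⟩
  calc K * dist x y ≤ K * ((K + 1 : ℝ)⁻¹ * 2⁻¹ ^ n) := by
        gcongr
        simpa using hxy
    _ = K / (K + 1) * 2⁻¹ ^ n := by ring
    _ < 2⁻¹ ^ n :=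
        mul_lt_of_lt_one_left (by positivity) ((div_lt_one (by positivity)).2 (lt_add_one _))

end Gasket

theorem stmt_12_general {ι κ V W 𝕜 E : Type*} [Finite ι] [Finite κ] [NormedAddCommGroup V]
    [NormedSpace ℝ V] [NormedAddCommGroup W] [NormedSpace ℝ W] [NormedField 𝕜]
    [SeminormedAddCommGroup E] [NormedSpace 𝕜 E] {b : AffineBasis ι ℝ V} {c : AffineBasis κ ℝ W}
    {S : Set V} {T : Set W} (hS : IsAttractor (midpointMaps b) S)
    (hT : IsAttractor (midpointMaps c) T) {N : ℕ} (hN : N ≠ 0)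
    {α : (Fin N → ι) → (Fin N → κ) → V × W → 𝕜} {h : (Fin N → ι) → (Fin N → κ) → V × W → E}
    {f : V × W → E} (hfc : ContinuousOn f (S ×ˢ T))
    (hf : ∀ ω η, ∀ t ∈ S, ∀ s ∈ T,
      f (wordMaps (midpointMaps b) N ω t, wordMaps (midpointMaps c) N η s) =
        α ω η (t, s) • f (t, s) + h ω η (t, s))
    {r : ℝ≥0} (hα : ∀ ω η, ∃ s > r, MemHolderOn s (α ω η) (S ×ˢ T))
    (hh : ∀ ω η, ∃ s > r, MemHolderOn s (h ω η) (S ×ˢ T))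
    (hαr : ∀ ω η, ∀ x ∈ S ×ˢ T, ‖α ω η x‖ ≤ (1 / 2 ^ N : ℝ) ^ (r : ℝ)) :
    MemHolderOn r f (S ×ˢ T) := by
  have hcompact : IsCompact (S ×ˢ T) := hS.isCompact.prod hT.isCompact
  refine memHolderOn_of_functional_eq (a := 2⁻¹ ^ N)
    (α := fun i : (Fin N → ι) × (Fin N → κ) => α i.1 i.2) (h := fun i => h i.1 i.2)
    hcompact.isBounded
    (mapsTo_prodMaps (mapsTo_wordMaps hS.mapsTo N) (mapsTo_wordMaps hT.mapsTo N)) (by positivity)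
    (pow_lt_one₀ zero_le (by norm_num) hN)
    (lipschitzWith_prodMaps (lipschitzWith_wordMaps (fun _ => lipschitzWith_midpoint _) N)
      (lipschitzWith_wordMaps (fun _ => lipschitzWith_midpoint _) N))
    (((linkedCells_midpointMaps hS).wordMaps N).prodMaps ((linkedCells_midpointMaps hT).wordMaps N))
    (hcompact.image_of_continuousOn hfc).isBounded
    (fun i x hx => hf i.1 i.2 x.1 hx.1 x.2 hx.2) (fun i => hα i.1 i.2) (fun i => hh i.1 i.2)
    fun i x hx => ?_
  simpa using hαr i.1 i.2 x hx

section EquilateralGasket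

variable {p : Fin 3 → E2} {S : Set E2}

lemma IsEquilateral.affineIndependent (hp : IsEquilateral p) : AffineIndependent ℝ p := by
  have hside : 0 < dist (p 0) (p 1) := dist_pos.2 (hp.1.ne (by decide))
  have h02 := hp.2 0 2 0 1 (by decide) (by decide)
  have h12 := hp.2 1 2 0 1 (by decide) (by decide)
  rw [affineIndependent_iff_not_collinear_of_ne (i₁ := 0) (i₂ := 1) (i₃ := 2) (by decide)
    (by decide) (by decide)]
  intro hcol
  rcases hcol.wbtw_or_wbtw_or_wbtw with hw | hw | hw
  all_goals
    have hdist := hw.dist_add_dist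
    simp only [dist_comm (p 1) (p 0), dist_comm (p 2), h02, h12] at hdist
    linarith

/-- The vertices of an equilateral triangle as an affine basis of the plane, which gives access to
barycentric coordinates. -/
def IsEquilateral.affineBasis (hp : IsEquilateral p) : AffineBasis (Fin 3) ℝ E2 where
  toFun := p
  ind' := hp.affineIndependent
  tot' := hp.affineIndependent.affineSpan_eq_top_iff_card_eq_finrank_add_one.2 (by simp)

lemma Lmap_eq_midpoint (p : Fin 3 → E2) (i : Fin 3) : Lmap p i = midpoint ℝ (p i) := by
  funext t
  rw [Lmap, midpoint_eq_smul_add, invOf_eq_inv, add_comm]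

lemma wordMap_eq_wordMaps (p : Fin 3 → E2) {n : ℕ} (ω : Word n) :
    wordMap p ω = wordMaps (midpointMaps p) n ω := by
  simp only [wordMap, wordMaps, Lmap_eq_midpoint]

lemma IsSG.isAttractor (hS : IsSG p S) :
    IsAttractor (midpointMaps hS.1.affineBasis) S where
  nonempty := hS.2.1
  isCompact := hS.2.2.1
  eq_iUnion_image := by
    have hunion := hS.2.2.2
    simp only [Lmap_eq_midpoint] at hunion
    exact hunion

end EquilateralGasket

section ProductHolder

variable {S : Set (E2 × E2)} {g : E2 × E2 → ℝ}

lemma dist_le_dist2 (x y : E2 × E2) : dist x y ≤ dist2 x y :=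
  max_le (Real.le_sqrt_of_sq_le (le_add_of_nonneg_right (sq_nonneg _)))
    (Real.le_sqrt_of_sq_le (le_add_of_nonneg_left (sq_nonneg _)))

lemma dist2_le_two_mul_dist (x y : E2 × E2) : dist2 x y ≤ 2 * dist x y := by
  have hfst : dist x.1 y.1 ≤ dist x y := le_max_left _ _
  have hsnd : dist x.2 y.2 ≤ dist x y := le_max_right _ _
  refine Real.sqrt_le_iff.2 ⟨by positivity, ?_⟩
  calc dist x.1 y.1 ^ 2 + dist x.2 y.2 ^ 2 ≤ dist x y ^ 2 + dist x y ^ 2 := by gcongr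
    _ ≤ (2 * dist x y) ^ 2 := by linarith [sq_nonneg (dist x y)]

lemma HolderOn2.memHolderOn {K : ℝ} {r : ℝ≥0} (hg : HolderOn2 S g K r) : MemHolderOn r g S := by
  refine memHolderOn_of_dist_le (C := |K| * 2 ^ (r : ℝ)) fun x hx y hy => ?_
  calc |g x - g y| ≤ K * dist2 x y ^ (r : ℝ) := hg x hx y hy
    _ ≤ |K| * (2 * dist x y) ^ (r : ℝ) := by
        gcongr
        exacts [Real.rpow_nonneg (Real.sqrt_nonneg _) _, le_abs_self K, Real.sqrt_nonneg _,
          dist2_le_two_mul_dist x y]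
    _ = |K| * 2 ^ (r : ℝ) * dist x y ^ (r : ℝ) := by
        rw [Real.mul_rpow zero_le_two dist_nonneg, mul_assoc]

lemma HolderOn2.exists_gt_memHolderOn {K β : ℝ} {r : ℝ≥0} (hg : HolderOn2 S g K β)
    (hβ : (r : ℝ) < β) : ∃ s > r, MemHolderOn s g S := by
  lift β to ℝ≥0 using r.coe_nonneg.trans hβ.le
  exact ⟨β, hβ, hg.memHolderOn⟩

lemma MemHolderOn.exists_holderOn2 {r : ℝ≥0} (hg : MemHolderOn r g S) :
    ∃ C, HolderOn2 S g C r := by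
  obtain ⟨C, hC⟩ := hg
  refine ⟨C, fun x hx y hy => (hC.dist_le hx hy).trans ?_⟩
  gcongr
  exact dist_le_dist2 x y

lemma abs_le_iSup_supAbs {ι : Type*} [Finite ι] {g : ι → E2 × E2 → ℝ} (hS : IsCompact S)
    (hg : ∀ i, ContinuousOn (g i) S) (i : ι) {x : E2 × E2} (hx : x ∈ S) :
    |g i x| ≤ ⨆ j, supAbs S (g j) :=
  (le_csSup (hS.bddAbove_image (hg i).abs) (mem_image_of_mem _ hx)).trans
    (le_ciSup (f := fun j => supAbs S (g j)) (finite_range _).bddAbove i)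

end ProductHolder

lemma lt_and_le_rpow_of_le_sub_one_add_log_div_log {a A s t : ℝ} (ha₀ : 0 < a) (ha₁ : a < 1)
    (hA : a < A) (hs : s ≤ 1) (ht : t ≤ s - 1 + Real.log A / Real.log a) :
    t < s ∧ A ≤ a ^ t := by
  rw [Real.log_div_log] at ht
  have hlog : Real.logb a A < 1 := by
    rwa [Real.logb_lt_iff_lt_rpow_of_base_lt_one ha₀ ha₁ (ha₀.trans hA), Real.rpow_one]
  exact ⟨by linarith,
    (Real.le_logb_iff_rpow_le_of_base_lt_one ha₀ ha₁ (ha₀.trans hA)).1 (by linarith)⟩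

/-- If `‖α‖_∞ := max_{ω,η} ‖α_{ωη}‖_∞ > 1/2^N` (and the exponent bound
`s − 1 + ln‖α‖_∞ / ln a` is positive, where `a = 1/2^N`), then the fractal
interpolation function `f` on `SG' × SG''` is Hölder continuous with any exponent
`λ` satisfying `0 < λ ≤ s − 1 + ln‖α‖_∞ / ln a`, where `s = min{s_h, s_α}`. -/
theorem stmt_12 (p q : Fin 3 → E2) (SG' SG'' : Set E2)
    (hSG' : IsSG p SG') (hSG'' : IsSG q SG'') (N : ℕ) (hN : 1 ≤ N)
    (hdiam : ∀ x ∈ SG' ×ˢ SG'', ∀ y ∈ SG' ×ˢ SG'', dist2 x y ≤ 1)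
    (α h : Word N → Word N → E2 × E2 → ℝ)
    (f : E2 × E2 → ℝ) (hfc : ContinuousOn f (SG' ×ˢ SG''))
    (hf : ∀ ω η : Word N, ∀ t ∈ SG', ∀ s ∈ SG'',
      f (wordMap p ω t, wordMap q η s) = α ω η (t, s) * f (t, s) + h ω η (t, s))
    (sh : ℝ) (hsh : 0 < sh ∧ sh ≤ 1) (Kh : ℝ)
    (hhHolder : ∀ ω η, HolderOn2 (SG' ×ˢ SG'') (h ω η) Kh sh)
    (sα : Word N → Word N → ℝ) (hsα : ∀ ω η, 0 < sα ω η ∧ sα ω η ≤ 1)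
    (Kα : Word N → Word N → ℝ)
    (hαHolder : ∀ ω η, HolderOn2 (SG' ×ˢ SG'') (α ω η) (Kα ω η) (sα ω η))
    (hαnorm : ∀ ω η, supAbs (SG' ×ˢ SG'') (α ω η) < 1)
    (hcase : 1 / 2 ^ N < (⨆ ωη : Word N × Word N, supAbs (SG' ×ˢ SG'') (α ωη.1 ωη.2)))
    (hpos : 0 < min sh (⨅ ωη : Word N × Word N, sα ωη.1 ωη.2) - 1 +
      Real.log (⨆ ωη : Word N × Word N, supAbs (SG' ×ˢ SG'') (α ωη.1 ωη.2)) /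
        Real.log (1 / 2 ^ N)) :
    ∀ lam : ℝ, 0 < lam →
      lam ≤ min sh (⨅ ωη : Word N × Word N, sα ωη.1 ωη.2) - 1 +
        Real.log (⨆ ωη : Word N × Word N, supAbs (SG' ×ˢ SG'') (α ωη.1 ωη.2)) /
          Real.log (1 / 2 ^ N) →
      ∃ C : ℝ, HolderOn2 (SG' ×ˢ SG'') f C lam := by
  intro lam hlam hle
  lift lam to ℝ≥0 using hlam.le
  simp only [wordMap_eq_wordMaps] at hf
  have ha₁ : (1 / 2 ^ N : ℝ) < 1 :=
    (div_lt_one (by positivity)).2 (one_lt_pow₀ one_lt_two (Nat.one_le_iff_ne_zero.1 hN))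
  obtain ⟨hlam_lt, hsup_le⟩ := lt_and_le_rpow_of_le_sub_one_add_log_div_log (by positivity) ha₁
    hcase ((min_le_left _ _).trans hsh.2) hle
  have hh_mem : ∀ ω η, ∃ s > lam, MemHolderOn s (h ω η) (SG' ×ˢ SG'') := fun ω η =>
    (hhHolder ω η).exists_gt_memHolderOn (hlam_lt.trans_le (min_le_left _ _))
  have hα_mem : ∀ ω η, ∃ s > lam, MemHolderOn s (α ω η) (SG' ×ˢ SG'') := fun ω η =>
    (hαHolder ω η).exists_gt_memHolderOn <| hlam_lt.trans_le <|
      (min_le_right _ _).trans (ciInf_le (finite_range _).bddBelow (ω, η))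
  have hα_cont : ∀ ω η, ContinuousOn (α ω η) (SG' ×ˢ SG'') := fun ω η =>
    let ⟨_, hs, hmem⟩ := hα_mem ω η
    hmem.continuousOn (pos_of_gt hs)
  refine (stmt_12_general (α := α) (h := h) hSG'.isAttractor hSG''.isAttractor
    (Nat.one_le_iff_ne_zero.1 hN) hfc hf hα_mem hh_mem fun ω η x hx => ?_).exists_holderOn2
  exact (abs_le_iSup_supAbs (g := fun ωη : Word N × Word N => α ωη.1 ωη.2)
    (hSG'.isAttractor.isCompact.prod hSG''.isAttractor.isCompact) (fun ωη => hα_cont ωη.1 ωη.2)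
    (ω, η) hx).trans hsup_le
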